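/- arXiv:2001.00381 — 2 statements merged into one kernel-verified Lean document; each statement's English description precedes it below -/
import Mathlib

section
/- Let K be a bounded measurable subset of ℝ² with |K| > 0, let M_Cov(K) = U_K Λ_K U_Kᵀ be an eigendecomposition of its covariance matrix with eigenvalues λ_{K,1} ≥ λ_{K,2} > 0, choose α_K = (√(det M_Cov(K)) / |K|)^{1/2}, and let K̂ = F_K(K) with F_K(x) = α_K Λ_K^{−1/2} U_Kᵀ x. Then for every continuously differentiable v with square-integrable gradient on K, setting v̂ = v ∘ F_K^{−1}, the H¹ seminorms satisfy the two-sided bound √(λ_{K,2}/λ_{K,1}) · |v̂|²_{H¹(K̂)} ≤ |v|²_{H¹(K)} ≤ √(λ_{K,1}/λ_{K,2}) · |v̂|²_{H¹(K̂)}, where |v|²_{H¹(ω)} = ∫_ω |∇v|² dx. -/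
open MeasureTheory Matrix

/-- Barycenter of a set `K ⊆ ℝ²`. -/
noncomputable def bary (K : Set (Fin 2 → ℝ)) : Fin 2 → ℝ :=
  fun i => ((volume K).toReal)⁻¹ * ∫ x in K, x i

/-- Covariance matrix of a set `K ⊆ ℝ²`. -/
noncomputable def cov (K : Set (Fin 2 → ℝ)) : Matrix (Fin 2) (Fin 2) ℝ :=
  Matrix.of fun i j => ((volume K).toReal)⁻¹ * ∫ x in K, (x i - bary K i) * (x j - bary K j)

/-- The matrix `A_K = α_K Λ_K^{-1/2} U_Kᵀ` of the map `F_K`. -/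
noncomputable def AK (U : Matrix (Fin 2) (Fin 2) ℝ) (l : Fin 2 → ℝ) (α : ℝ) :
    Matrix (Fin 2) (Fin 2) ℝ :=
  α • ((Matrix.diagonal fun i => (Real.sqrt (l i))⁻¹) * Uᵀ)

/-- The matrix `A_K⁻¹ = α_K⁻¹ U_K Λ_K^{1/2}` of the inverse map `F_K⁻¹`. -/
noncomputable def AKinv (U : Matrix (Fin 2) (Fin 2) ℝ) (l : Fin 2 → ℝ) (α : ℝ) :
    Matrix (Fin 2) (Fin 2) ℝ :=
  α⁻¹ • (U * Matrix.diagonal fun i => Real.sqrt (l i))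

/-- Gradient of a scalar function on `ℝ²`, as the vector of partial derivatives. -/
noncomputable def grad (v : (Fin 2 → ℝ) → ℝ) (x : Fin 2 → ℝ) : Fin 2 → ℝ :=
  fun i => fderiv ℝ v x (Pi.single i 1)

/-- Directional derivatives are dot products with the gradient. -/
lemma grad_dotProduct (v : (Fin 2 → ℝ) → ℝ) (x z : Fin 2 → ℝ) :
    fderiv ℝ v x z = grad v x ⬝ᵥ z := by
  conv_lhs => rw [pi_eq_sum_univ' z]
  simp [grad, dotProduct, mul_comm]

/-- Chain rule for a linear change of variables. -/
lemma grad_comp_mulVec {v : (Fin 2 → ℝ) → ℝ} (hv : Differentiable ℝ v)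
    (B : Matrix (Fin 2) (Fin 2) ℝ) (y : Fin 2 → ℝ) :
    grad (v ∘ B.mulVec) y = Bᵀ *ᵥ grad v (B *ᵥ y) := by
  have hB : HasFDerivAt B.mulVec (Matrix.toLin' B).toContinuousLinearMap y :=
    (Matrix.toLin' B).toContinuousLinearMap.hasFDerivAt
  ext i
  rw [grad, ((hv _).hasFDerivAt.comp y hB).fderiv]
  simp [grad_dotProduct, mulVec_transpose, vecMul, col_def, transpose_apply, dotProduct]

lemma continuous_grad {v : (Fin 2 → ℝ) → ℝ} (hv : ContDiff ℝ 1 v) : Continuous (grad v) :=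
  continuous_pi fun _ => (hv.continuous_fderiv one_ne_zero).clm_apply continuous_const

/-- Change of variables `y = A x` for an invertible matrix `A` with inverse `B`. -/
lemma setIntegral_image_mulVec {A B : Matrix (Fin 2) (Fin 2) ℝ} (hBA : B * A = 1)
    {K : Set (Fin 2 → ℝ)} (hK : MeasurableSet K) (g : (Fin 2 → ℝ) → ℝ) :
    ∫ y in A.mulVec '' K, g y = |A.det| * ∫ x in K, g (A *ᵥ x) := by
  have hinj : Set.InjOn A.mulVec K := fun x _ y _ h => by
    simpa only [mulVec_mulVec, hBA, one_mulVec] using congrArg B.mulVec h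
  have hA : ∀ x ∈ K, HasFDerivWithinAt A.mulVec (Matrix.toLin' A).toContinuousLinearMap K x :=
    fun x _ => (Matrix.toLin' A).toContinuousLinearMap.hasFDerivWithinAt
  rw [integral_image_eq_integral_abs_det_fderiv_smul volume hK hA hinj, ← integral_const_mul]
  simp [ContinuousLinearMap.det]

/-- Orthogonal matrices preserve the sum of squares. -/
lemma sum_sq_transpose_mulVec {U : Matrix (Fin 2) (Fin 2) ℝ} (hU : U * Uᵀ = 1)
    (g : Fin 2 → ℝ) : ∑ i, ((Uᵀ *ᵥ g) i) ^ 2 = ∑ i, (g i) ^ 2 := by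
  have h : (Uᵀ *ᵥ g) ⬝ᵥ (Uᵀ *ᵥ g) = g ⬝ᵥ g := by
    rw [dotProduct_mulVec, vecMul_transpose, mulVec_mulVec, hU, one_mulVec]
  simpa [dotProduct, sq] using h

lemma AKinv_mul_AK {U : Matrix (Fin 2) (Fin 2) ℝ} (hU : U * Uᵀ = 1) {l : Fin 2 → ℝ}
    (hl : ∀ i, 0 < l i) {α : ℝ} (hα : α ≠ 0) : AKinv U l α * AK U l α = 1 := by
  have hd : (diagonal fun i => √(l i)) * (diagonal fun i => (√(l i))⁻¹) = 1 := by
    rw [diagonal_mul_diagonal, ← diagonal_one]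
    congr 1
    ext i
    exact mul_inv_cancel₀ (Real.sqrt_pos.2 (hl i)).ne'
  rw [AKinv, AK, smul_mul_smul_comm, inv_mul_cancel₀ hα, one_smul, Matrix.mul_assoc,
    ← Matrix.mul_assoc (diagonal _), hd, Matrix.one_mul, hU]

lemma abs_det_AK {U : Matrix (Fin 2) (Fin 2) ℝ} (hU : U * Uᵀ = 1) (l : Fin 2 → ℝ) (α : ℝ) :
    |(AK U l α).det| = α ^ 2 * ((√(l 0))⁻¹ * (√(l 1))⁻¹) := by
  have hd : |U.det| = 1 := by
    have h := congrArg det hU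
    rw [det_mul, det_transpose, det_one] at h
    rw [← sq_eq_sq₀ (abs_nonneg _) zero_le_one, sq_abs, sq, h, one_pow]
  rw [AK, det_smul, det_mul, det_diagonal, det_transpose, abs_mul, abs_mul, hd, Fin.prod_univ_two,
    abs_of_nonneg (by positivity : (0 : ℝ) ≤ (√(l 0))⁻¹ * (√(l 1))⁻¹), Fintype.card_fin,
    abs_of_nonneg (sq_nonneg α), mul_one]

/-- The `H¹` seminorm on the reference element, pulled back to `K`. -/
lemma setIntegral_sq_grad_comp_AKinv {K : Set (Fin 2 → ℝ)} (hK : MeasurableSet K)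
    {U : Matrix (Fin 2) (Fin 2) ℝ} (hU : U * Uᵀ = 1) {l : Fin 2 → ℝ} (hl : ∀ i, 0 < l i)
    {α : ℝ} (hα : α ≠ 0) {v : (Fin 2 → ℝ) → ℝ} (hv : Differentiable ℝ v) :
    ∫ y in (AK U l α).mulVec '' K, ∑ i, (grad (v ∘ (AKinv U l α).mulVec) y i) ^ 2 =
      ∫ x in K, (√(l 0 / l 1) * ((Uᵀ *ᵥ grad v x) 0) ^ 2
        + √(l 1 / l 0) * ((Uᵀ *ᵥ grad v x) 1) ^ 2) := by
  have hinv := AKinv_mul_AK hU hl hα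
  rw [setIntegral_image_mulVec hinv hK, abs_det_AK hU, ← integral_const_mul]
  congr 1
  ext x
  have h0 := Real.sqrt_pos.2 (hl 0)
  have h1 := Real.sqrt_pos.2 (hl 1)
  have hB : (AKinv U l α)ᵀ = α⁻¹ • ((diagonal fun i => √(l i)) * Uᵀ) := by
    rw [AKinv, transpose_smul, transpose_mul, diagonal_transpose]
  rw [grad_comp_mulVec hv, mulVec_mulVec, hinv, one_mulVec, hB, smul_mulVec, ← mulVec_mulVec,
    Fin.sum_univ_two, Real.sqrt_div (hl 0).le, Real.sqrt_div (hl 1).le]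
  simp only [Pi.smul_apply, mulVec_diagonal, smul_eq_mul]
  field_simp

/-- Two-sided bound between the `H¹` seminorms of `v` on `K` and of `v̂ = v ∘ F_K⁻¹`
on the reference element `K̂ = F_K(K)`:
`√(λ₂/λ₁) |v̂|²_{H¹(K̂)} ≤ |v|²_{H¹(K)} ≤ √(λ₁/λ₂) |v̂|²_{H¹(K̂)}`. -/
theorem h1_seminorm_equivalence (K : Set (Fin 2 → ℝ)) (hK : MeasurableSet K)
    (hKb : Bornology.IsBounded K) (hKpos : 0 < volume K)
    (U : Matrix (Fin 2) (Fin 2) ℝ) (hU : U * Uᵀ = 1)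
    (l : Fin 2 → ℝ) (hl : 0 < l 1) (hle : l 1 ≤ l 0)
    (hdecomp : cov K = U * Matrix.diagonal l * Uᵀ)
    (α : ℝ) (hα : α = Real.sqrt (Real.sqrt ((cov K).det) / (volume K).toReal))
    (v : (Fin 2 → ℝ) → ℝ) (hv : ContDiff ℝ 1 v)
    (hvg : MeasureTheory.Integrable (fun x => ∑ i, (grad v x i) ^ 2) (volume.restrict K)) :
    Real.sqrt (l 1 / l 0)
        * (∫ y in (AK U l α).mulVec '' K, ∑ i, (grad (v ∘ (AKinv U l α).mulVec) y i) ^ 2)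
      ≤ (∫ x in K, ∑ i, (grad v x i) ^ 2)
    ∧ (∫ x in K, ∑ i, (grad v x i) ^ 2)
      ≤ Real.sqrt (l 0 / l 1)
        * (∫ y in (AK U l α).mulVec '' K, ∑ i, (grad (v ∘ (AKinv U l α).mulVec) y i) ^ 2) := by
  have hlpos : ∀ i, 0 < l i := Fin.forall_fin_two.2 ⟨hl.trans_le hle, hl⟩
  have hα0 : α ≠ 0 := by
    have hdet : 0 < (cov K).det := by
      have h := congrArg det hU
      rw [det_mul, det_one] at h
      rw [hdecomp, det_mul, det_mul, det_diagonal, mul_right_comm, h, one_mul]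
      exact Finset.prod_pos fun i _ => hlpos i
    have hvol : 0 < (volume K).toReal := ENNReal.toReal_pos hKpos.ne' hKb.measure_lt_top.ne
    rw [hα]
    positivity
  rw [setIntegral_sq_grad_comp_AKinv hK hU hlpos hα0 (hv.differentiable one_ne_zero)]
  set w : (Fin 2 → ℝ) → Fin 2 → ℝ := fun x => Uᵀ *ᵥ grad v x
  have hw : ∀ x, ∑ i, (grad v x i) ^ 2 = (w x 0) ^ 2 + (w x 1) ^ 2 := fun x => by
    rw [← sum_sq_transpose_mulVec hU, Fin.sum_univ_two]
  have hwc : Continuous w := continuous_const.matrix_mulVec (continuous_grad hv)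
  have hwi : ∀ i, Integrable (fun x => (w x i) ^ 2) (volume.restrict K) := fun i => by
    refine hvg.mono' (((continuous_apply i).comp hwc).pow 2).aestronglyMeasurable
      (.of_forall fun x => ?_)
    rw [Real.norm_of_nonneg (sq_nonneg _), ← sum_sq_transpose_mulVec hU]
    exact Finset.single_le_sum (f := fun i => (w x i) ^ 2) (fun _ _ => sq_nonneg _)
      (Finset.mem_univ i)
  have hint : Integrable (fun x => √(l 0 / l 1) * (w x 0) ^ 2 + √(l 1 / l 0) * (w x 1) ^ 2)
      (volume.restrict K) := ((hwi 0).const_mul _).add ((hwi 1).const_mul _)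
  have hmul : √(l 1 / l 0) * √(l 0 / l 1) = 1 := by
    have h0 := hlpos 0
    rw [← Real.sqrt_mul (by positivity), div_mul_div_cancel₀ h0.ne', div_self hl.ne', Real.sqrt_one]
  have hsmall : √(l 1 / l 0) ≤ 1 := Real.sqrt_le_one.2 ((div_le_one (hlpos 0)).2 hle)
  have hlarge : 1 ≤ √(l 0 / l 1) := Real.one_le_sqrt.2 ((one_le_div hl).2 hle)
  rw [← integral_const_mul, ← integral_const_mul]
  refine ⟨integral_mono (hint.const_mul _) hvg fun x => ?_,
    integral_mono hvg (hint.const_mul _) fun x => ?_⟩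
  · have h : √(l 1 / l 0) * √(l 1 / l 0) * (w x 1) ^ 2 ≤ (w x 1) ^ 2 :=
      mul_le_of_le_one_left (sq_nonneg _) (mul_le_one₀ hsmall (Real.sqrt_nonneg _) hsmall)
    dsimp only
    rw [hw, mul_add, ← mul_assoc, ← mul_assoc, hmul, one_mul]
    gcongr
  · have h : (w x 0) ^ 2 ≤ √(l 0 / l 1) * √(l 0 / l 1) * (w x 0) ^ 2 :=
      le_mul_of_one_le_left (sq_nonneg _) (one_le_mul_of_one_le_of_one_le hlarge hlarge)
    dsimp only
    rw [hw, mul_add, ← mul_assoc, ← mul_assoc, mul_comm √(l 0 / l 1) √(l 1 / l 0), hmul, one_mul]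
    gcongr
end

section
/- Let a ≥ b > 0, K* = (0,a) × (0,b), and w(x,y) = (x − a/2)(y − b/2)/(ab). Define the stabilization term S(w) = w(0,0)² + w(a,0)² + w(a,b)² + w(0,b)² as the sum of squared vertex values. Then S(w) = 1/4, and with λ₁ = a²/12, λ₂ = b²/12 the ratio satisfies the exact identity |w|²_{H¹(K*)} / S(w) = (1/3)(√(λ₁/λ₂) + √(λ₂/λ₁)) = (1/3)(a/b + b/a). -/
open MeasureTheory Matrix

/-- The open rectangle `K* = (0,a) × (0,b) ⊆ ℝ²`. -/
def rect (a b : ℝ) : Set (Fin 2 → ℝ) :=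
  {x | 0 < x 0 ∧ x 0 < a ∧ 0 < x 1 ∧ x 1 < b}

/-- The function `w(x,y) = (x − a/2)(y − b/2)/(ab)`. -/
noncomputable def wfun (a b : ℝ) : (Fin 2 → ℝ) → ℝ :=
  fun x => (x 0 - a / 2) * (x 1 - b / 2) / (a * b)

/-- The stabilization term `S(v)`: the sum of the squared values of `v` at the four
vertices `(0,0), (a,0), (a,b), (0,b)` of the rectangle `(0,a) × (0,b)`. -/
noncomputable def stab (a b : ℝ) (v : (Fin 2 → ℝ) → ℝ) : ℝ :=
  v ![0, 0] ^ 2 + v ![a, 0] ^ 2 + v ![a, b] ^ 2 + v ![0, b] ^ 2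

/-- The partial derivatives of `wfun`. -/
lemma grad_wfun (a b : ℝ) (x : Fin 2 → ℝ) :
    grad (wfun a b) x = ![(x 1 - b / 2) / (a * b), (x 0 - a / 2) / (a * b)] := by
  have h : HasFDerivAt (wfun a b)
      ((a * b)⁻¹ • ((x 0 - a / 2) • ContinuousLinearMap.proj (R := ℝ) (φ := fun _ : Fin 2 => ℝ) 1
        + (x 1 - b / 2) • ContinuousLinearMap.proj (R := ℝ) (φ := fun _ : Fin 2 => ℝ) 0)) x := by
    have h0 := (hasFDerivAt_apply (𝕜 := ℝ) (0 : Fin 2) x).sub_const (a / 2)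
    have h1 := (hasFDerivAt_apply (𝕜 := ℝ) (1 : Fin 2) x).sub_const (b / 2)
    exact (h0.mul h1).mul_const (a * b)⁻¹
  funext i
  fin_cases i <;> simp [grad, h.fderiv] <;> ring

/-- The open rectangle corresponds to a product of intervals. -/
lemma setIntegral_rect (a b : ℝ) (f : ℝ × ℝ → ℝ) :
    ∫ x in rect a b, f (x 0, x 1) = ∫ p in Set.Ioo 0 a ×ˢ Set.Ioo 0 b, f p := by
  have h := (volume_preserving_finTwoArrow ℝ).setIntegral_preimage_emb
    (MeasurableEquiv.measurableEmbedding _) f (Set.Ioo 0 a ×ˢ Set.Ioo 0 b)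
  rw [← h]
  have hset : rect a b = MeasurableEquiv.finTwoArrow ⁻¹' (Set.Ioo 0 a ×ˢ Set.Ioo 0 b) := by
    ext x
    simp [rect, MeasurableEquiv.finTwoArrow, and_assoc]
  rw [hset]
  rfl

lemma integral_Ioo_sub_half_sq {c : ℝ} (hc : 0 ≤ c) :
    ∫ t in Set.Ioo 0 c, (t - c / 2) ^ 2 = c ^ 3 / 12 := by
  rw [← integral_Ioc_eq_integral_Ioo, ← intervalIntegral.integral_of_le hc,
    intervalIntegral.integral_comp_sub_right (fun t => t ^ 2), integral_pow]
  ring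

/-- The squared `H¹` seminorm of `wfun` on the rectangle. -/
lemma integral_grad_wfun_sq {a b : ℝ} (ha : 0 < a) (hb : 0 < b) :
    ∫ x in rect a b, ∑ i, (grad (wfun a b) x i) ^ 2 = (1 / 12) * (a / b + b / a) := by
  have hint : ∀ {f : ℝ × ℝ → ℝ}, Continuous f →
      IntegrableOn f (Set.Ioo 0 a ×ˢ Set.Ioo 0 b) (volume.prod volume) := fun hf =>
    (hf.continuousOn.integrableOn_compact (isCompact_Icc.prod isCompact_Icc)).mono_set
      (Set.prod_mono Set.Ioo_subset_Icc_self Set.Ioo_subset_Icc_self)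
  have hgrad : ∀ x : Fin 2 → ℝ, ∑ i, (grad (wfun a b) x i) ^ 2 =
      (fun p : ℝ × ℝ => ((a * b) ^ 2)⁻¹ *
        (1 * (p.2 - b / 2) ^ 2 + (p.1 - a / 2) ^ 2 * 1)) (x 0, x 1) := by
    intro x
    simp [grad_wfun, Fin.sum_univ_two, div_pow]
    ring
  simp_rw [hgrad]
  rw [setIntegral_rect a b (fun p : ℝ × ℝ => ((a * b) ^ 2)⁻¹ *
      (1 * (p.2 - b / 2) ^ 2 + (p.1 - a / 2) ^ 2 * 1)),
    integral_const_mul, Measure.volume_eq_prod,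
    integral_add (hint (by fun_prop)) (hint (by fun_prop)),
    setIntegral_prod_mul (fun _ => (1 : ℝ)) (fun y => (y - b / 2) ^ 2),
    setIntegral_prod_mul (fun x => (x - a / 2) ^ 2) (fun _ => (1 : ℝ)),
    integral_Ioo_sub_half_sq ha.le, integral_Ioo_sub_half_sq hb.le]
  simp [ha.le, hb.le]
  field_simp
  ring

lemma stab_wfun {a b : ℝ} (ha : 0 < a) (hb : 0 < b) : stab a b (wfun a b) = 1 / 4 := by
  simp only [stab, wfun, cons_val_zero, cons_val_one]
  field_simp
  ring

lemma sqrt_sq_div_div_sq_div {c d : ℝ} (hc : 0 < c) (hd : 0 < d) :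
    Real.sqrt ((c ^ 2 / 12) / (d ^ 2 / 12)) = c / d := by
  rw [div_div_div_cancel_right₀ (by norm_num), ← div_pow, Real.sqrt_sq (by positivity)]

/-- `S(w) = 1/4`, and with `λ₁ = a²/12`, `λ₂ = b²/12` the ratio between the `H¹`
seminorm squared of `w` and the stabilization term satisfies
`|w|²_{H¹(K*)}/S(w) = (1/3)(√(λ₁/λ₂) + √(λ₂/λ₁)) = (1/3)(a/b + b/a)`. -/
theorem stab_ratio_wfun (a b : ℝ) (hb : 0 < b) (hba : b ≤ a) :
    stab a b (wfun a b) = 1 / 4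
    ∧ (∫ x in rect a b, ∑ i, (grad (wfun a b) x i) ^ 2) / stab a b (wfun a b)
        = (1 / 3) * (Real.sqrt ((a ^ 2 / 12) / (b ^ 2 / 12))
            + Real.sqrt ((b ^ 2 / 12) / (a ^ 2 / 12)))
    ∧ (∫ x in rect a b, ∑ i, (grad (wfun a b) x i) ^ 2) / stab a b (wfun a b)
        = (1 / 3) * (a / b + b / a) := by
  have ha : 0 < a := hb.trans_le hba
  have hratio : (∫ x in rect a b, ∑ i, (grad (wfun a b) x i) ^ 2) / stab a b (wfun a b)
      = (1 / 3) * (a / b + b / a) := by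
    rw [stab_wfun ha hb, integral_grad_wfun_sq ha hb]
    ring
  refine ⟨stab_wfun ha hb, ?_, hratio⟩
  rw [hratio, sqrt_sq_div_div_sq_div ha hb, sqrt_sq_div_div_sq_div hb ha]
end
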